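/- Let γ > 1 be a real number, let n₀, m₀ be coprime positive integers, and set α = γ^{−n₀}, β = γ^{−m₀}; assume 0 < α, β < 1/2 and τ(C_α)·τ(C_β) < 1. If 1/γ ≤ τ(C_α)·τ(C_β), then for every nonzero real λ: C_α − λ·C_β = [−λ, 1] if and only if λ belongs to ⋃_{n = −m₀+1}^{n₀} γⁿ·[ (1−2α)/(γβ), α/(1−2β) ], i.e., there exists an integer n with −m₀ + 1 ≤ n ≤ n₀ and γⁿ·(1−2α)/(γβ) ≤ λ ≤ γⁿ·α/(1−2β). -/

import Mathlib

/-!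
Reflecting `C_α` by `x ↦ 1 - x` turns the claim into: `C_α + l · C_β` fills its hull `[0, 1 + l]`
iff `l` lies in the union of intervals.

Sufficiency. Consider `u · C_α + v · C_β` with `v / u ∈ γⁿ · [(1 - 2α)/(γβ), α/(1 - 2β)]`.
Splitting `C_α` into its two halves moves the index `n` to `n + n₀`, splitting `C_β` moves it to
`n - m₀`. Doing the former when `n ≤ 0` and the latter when `n ≥ 1` keeps `n` in `[-m₀ + 1, n₀]`,
and for such `n` the hulls of the two halves cover `[0, u + v]`. So the subdivision never stops.
Each step multiplies `u v` by at most `max α β` while `u / v` stays bounded, so every point of the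
hull is a limit of points of the sum, which is compact.

Necessity. The first gap of `αⁱ C_α` must be at most as long as the first piece of `l βʲ C_β`, or
vice versa. As `n₀` and `m₀` are coprime, `αⁱ / βʲ` takes every value `γⁿ`, so `l` avoids every
interval `γⁿ · (α/(1 - 2β), (1 - 2α)/β)` between two consecutive members of the union. The central
gaps of `C_α` and `C_β` give `1 - 2α ≤ l ≤ 1/(1 - 2β)`, whose ends are the left end of the member
`n = -m₀ + 1` and the right end of the member `n = n₀`.
-/

open Set MeasureTheory

/-- The middle Cantor set `C_a`, for `0 < a < 1/2`:
`C_a = { (1-a) * ∑ εₖ aᵏ : εₖ ∈ {0,1} }`. -/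
noncomputable def middleCantor (a : ℝ) : Set ℝ :=
  {x : ℝ | ∃ ε : ℕ → Bool, x = (1 - a) * ∑' k : ℕ, (if ε k then a ^ k else 0)}

/-- The arithmetic difference `C_a - l · C_b`. -/
noncomputable def diffSet (a b l : ℝ) : Set ℝ :=
  {z : ℝ | ∃ x ∈ middleCantor a, ∃ y ∈ middleCantor b, z = x - l * y}

/-! ### The middle Cantor set -/

/-- The point of `C_a` with digit sequence `ε`. -/
noncomputable def cantorPoint (a : ℝ) (ε : ℕ → Bool) : ℝ :=
  (1 - a) * ∑' k : ℕ, (if ε k then a ^ k else 0)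

lemma range_cantorPoint (a : ℝ) : range (cantorPoint a) = middleCantor a := by
  ext x
  exact exists_congr fun ε => eq_comm

section MiddleCantor

variable {a x : ℝ}

lemma summable_digits (ha : a ∈ Ico 0 1) (ε : ℕ → Bool) :
    Summable fun k : ℕ => if ε k then a ^ k else 0 := by
  refine (summable_geometric_of_lt_one ha.1 ha.2).of_nonneg_of_le (fun k => ?_) fun k => ?_ <;>
    split_ifs <;> simp [pow_nonneg ha.1]

lemma cantorPoint_eq_add (ha : a ∈ Ico 0 1) (ε : ℕ → Bool) :
    cantorPoint a ε = a * cantorPoint a (fun k => ε (k + 1)) + if ε 0 then 1 - a else 0 := by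
  have hshift : ∑' k : ℕ, (if ε (k + 1) then a ^ (k + 1) else 0)
      = a * ∑' k : ℕ, (if ε (k + 1) then a ^ k else 0) := by
    simp only [← tsum_mul_left, mul_ite, mul_zero, pow_succ']
  rw [cantorPoint, cantorPoint, (summable_digits ha ε).tsum_eq_zero_add, hshift, pow_zero]
  split_ifs <;> ring

lemma cantorPoint_not (ha : a ∈ Ico 0 1) (ε : ℕ → Bool) :
    cantorPoint a (fun k => !ε k) = 1 - cantorPoint a ε := by
  have hsum : ∑' k : ℕ, (if !ε k then a ^ k else 0) + ∑' k : ℕ, (if ε k then a ^ k else 0)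
      = (1 - a)⁻¹ := by
    rw [← (summable_digits ha _).tsum_add (summable_digits ha ε),
      ← tsum_geometric_of_lt_one ha.1 ha.2]
    exact tsum_congr fun k => by cases ε k <;> simp
  rw [eq_sub_iff_add_eq, cantorPoint, cantorPoint, ← mul_add, hsum,
    mul_inv_cancel₀ (sub_ne_zero.2 ha.2.ne')]

lemma continuous_cantorPoint (ha : a ∈ Ico 0 1) : Continuous (cantorPoint a) := by
  refine continuous_const.mul (continuous_tsum (u := fun k => a ^ k) (fun k => ?_)
    (summable_geometric_of_lt_one ha.1 ha.2) fun k ε => ?_)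
  · exact (continuous_of_discreteTopology (f := fun d : Bool => if d then a ^ k else 0)).comp
      (continuous_apply k)
  · split_ifs <;> simp [abs_of_nonneg ha.1, pow_nonneg ha.1]

lemma isCompact_middleCantor (ha : a ∈ Ico 0 1) : IsCompact (middleCantor a) :=
  range_cantorPoint a ▸ isCompact_range (continuous_cantorPoint ha)

lemma zero_mem_middleCantor (a : ℝ) : 0 ∈ middleCantor a :=
  ⟨fun _ => false, by simp⟩

lemma one_sub_mem_middleCantor (ha : a ∈ Ico 0 1) (hx : x ∈ middleCantor a) :
    1 - x ∈ middleCantor a := by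
  rw [← range_cantorPoint] at hx ⊢
  obtain ⟨ε, rfl⟩ := hx
  exact ⟨_, cantorPoint_not ha ε⟩

lemma middleCantor_subset_Icc (ha : a ∈ Ico 0 1) : middleCantor a ⊆ Icc 0 1 := by
  have hnonneg : ∀ x ∈ middleCantor a, 0 ≤ x := by
    rintro _ ⟨ε, rfl⟩
    refine mul_nonneg (sub_nonneg.2 ha.2.le) (tsum_nonneg fun k => ?_)
    split_ifs
    exacts [pow_nonneg ha.1 k, le_rfl]
  exact fun x hx => ⟨hnonneg x hx, sub_nonneg.1 (hnonneg _ (one_sub_mem_middleCantor ha hx))⟩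

lemma mem_middleCantor_iff (ha : a ∈ Ico 0 1) :
    x ∈ middleCantor a ↔ ∃ y ∈ middleCantor a, x = a * y ∨ x = a * y + (1 - a) := by
  rw [← range_cantorPoint]
  constructor
  · rintro ⟨ε, rfl⟩
    refine ⟨_, ⟨fun k => ε (k + 1), rfl⟩, ?_⟩
    rw [cantorPoint_eq_add ha ε]
    cases ε 0 <;> simp
  · rintro ⟨_, ⟨ε, rfl⟩, rfl | rfl⟩
    · exact ⟨fun k => Nat.casesOn k false ε, by rw [cantorPoint_eq_add ha]; simp⟩
    · exact ⟨fun k => Nat.casesOn k true ε, by rw [cantorPoint_eq_add ha]; simp⟩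

lemma le_pow_succ_or_le_of_mem_middleCantor (ha : a ∈ Ico 0 1) (i : ℕ) (hx : x ∈ middleCantor a) :
    x ≤ a ^ (i + 1) ∨ a ^ i * (1 - a) ≤ x := by
  induction i generalizing x with
  | zero =>
    obtain ⟨y, hy, rfl | rfl⟩ := (mem_middleCantor_iff ha).1 hx
    · left
      simpa using mul_le_of_le_one_right ha.1 (middleCantor_subset_Icc ha hy).2
    · right
      simpa using mul_nonneg ha.1 (middleCantor_subset_Icc ha hy).1
  | succ i ih =>
    obtain ⟨y, hy, rfl | rfl⟩ := (mem_middleCantor_iff ha).1 hx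
    · simp only [pow_succ' a (i + 1), pow_succ' a i, mul_assoc] at ih ⊢
      exact (ih hy).imp (mul_le_mul_of_nonneg_left · ha.1) (mul_le_mul_of_nonneg_left · ha.1)
    · right
      have hpow : a ^ (i + 1) * (1 - a) ≤ 1 - a :=
        mul_le_of_le_one_left (sub_nonneg.2 ha.2.le) (pow_le_one₀ ha.1 ha.2.le)
      linarith [mul_nonneg ha.1 (middleCantor_subset_Icc ha hy).1]

end MiddleCantor

/-! ### Sums of two scaled Cantor sets -/

/-- The sum `u · C_a + v · C_b`, whose convex hull is `[0, u + v]` when `u` and `v` are nonnegative.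
Two scaling factors rather than one ratio make the roles of `a` and `b` symmetric. -/
noncomputable def cantorSum (a b u v : ℝ) : Set ℝ :=
  image2 (fun x y => u * x + v * y) (middleCantor a) (middleCantor b)

lemma cantorSum_comm (a b u v : ℝ) : cantorSum a b u v = cantorSum b a v u := by
  rw [cantorSum, image2_swap]
  simp only [cantorSum, add_comm]

lemma zero_mem_cantorSum (a b u v : ℝ) : 0 ∈ cantorSum a b u v :=
  ⟨0, zero_mem_middleCantor a, 0, zero_mem_middleCantor b, by simp⟩

section CantorSum

variable {a b u v : ℝ}

lemma isCompact_cantorSum (ha : a ∈ Ico 0 1) (hb : b ∈ Ico 0 1) :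
    IsCompact (cantorSum a b u v) := by
  rw [cantorSum, ← image_prod]
  exact ((isCompact_middleCantor ha).prod (isCompact_middleCantor hb)).image (by fun_prop)

lemma cantorSum_subset_Icc (ha : a ∈ Ico 0 1) (hb : b ∈ Ico 0 1) (hu : 0 ≤ u) (hv : 0 ≤ v) :
    cantorSum a b u v ⊆ Icc 0 (u + v) := by
  rintro _ ⟨x, hx, y, hy, rfl⟩
  obtain ⟨hx₀, hx₁⟩ := middleCantor_subset_Icc ha hx
  obtain ⟨hy₀, hy₁⟩ := middleCantor_subset_Icc hb hy
  exact ⟨by positivity, add_le_add (mul_le_of_le_one_right hu hx₁) (mul_le_of_le_one_right hv hy₁)⟩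

lemma diffSet_eq_image_cantorSum (ha : a ∈ Ico 0 1) (l : ℝ) :
    diffSet a b l = (fun z => 1 - z) '' cantorSum a b 1 l := by
  ext z
  constructor
  · rintro ⟨x, hx, y, hy, rfl⟩
    exact ⟨_, ⟨1 - x, one_sub_mem_middleCantor ha hx, y, hy, rfl⟩, by ring⟩
  · rintro ⟨_, ⟨x, hx, y, hy, rfl⟩, rfl⟩
    exact ⟨1 - x, one_sub_mem_middleCantor ha hx, y, hy, by ring⟩

lemma diffSet_eq_Icc_iff (ha : a ∈ Ico 0 1) (l : ℝ) :
    diffSet a b l = Icc (-l) 1 ↔ cantorSum a b 1 l = Icc 0 (1 + l) := by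
  have hIcc : Icc (-l) 1 = (fun z => 1 - z) '' Icc 0 (1 + l) := by simp
  rw [diffSet_eq_image_cantorSum ha, hIcc, (image_injective.2 sub_right_injective).eq_iff]

lemma nonneg_of_diffSet_eq_Icc {l : ℝ} (h : diffSet a b l = Icc (-l) 1) : 0 ≤ l := by
  have h₀ : (0 : ℝ) ∈ diffSet a b l :=
    ⟨0, zero_mem_middleCantor a, 0, zero_mem_middleCantor b, by simp⟩
  rw [h] at h₀
  exact neg_nonpos.1 h₀.1

/-! ### Filling the hull by repeated subdivision -/

lemma cantorSum_mul_subset (ha : a ∈ Ico 0 1) : cantorSum a b (u * a) v ⊆ cantorSum a b u v := by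
  rintro _ ⟨x, hx, y, hy, rfl⟩
  exact ⟨a * x, (mem_middleCantor_iff ha).2 ⟨x, hx, .inl rfl⟩, y, hy, by ring⟩

lemma image_add_cantorSum_mul_subset (ha : a ∈ Ico 0 1) :
    (fun z => z + u * (1 - a)) '' cantorSum a b (u * a) v ⊆ cantorSum a b u v := by
  rintro _ ⟨_, ⟨x, hx, y, hy, rfl⟩, rfl⟩
  exact ⟨a * x + (1 - a), (mem_middleCantor_iff ha).2 ⟨x, hx, .inr rfl⟩, y, hy, by ring⟩

lemma exists_infDist_cantorSum_le_left (ha : a ∈ Ico 0 1) (huv : u * (1 - 2 * a) ≤ v) {z : ℝ}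
    (hz : z ∈ Icc 0 (u + v)) : ∃ z' ∈ Icc 0 (u * a + v),
      Metric.infDist z (cantorSum a b u v) ≤ Metric.infDist z' (cantorSum a b (u * a) v) := by
  have hne : (cantorSum a b (u * a) v).Nonempty := ⟨0, zero_mem_cantorSum ..⟩
  rcases le_total z (u * a + v) with hz' | hz'
  · exact ⟨z, ⟨hz.1, hz'⟩, Metric.infDist_le_infDist_of_subset (cantorSum_mul_subset ha) hne⟩
  · refine ⟨z - u * (1 - a), ⟨by linarith, by linarith [hz.2]⟩, ?_⟩
    calc Metric.infDist z (cantorSum a b u v)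
        = Metric.infDist (z - u * (1 - a) + u * (1 - a)) (cantorSum a b u v) := by
          rw [sub_add_cancel]
      _ ≤ Metric.infDist (z - u * (1 - a) + u * (1 - a))
            ((fun w => w + u * (1 - a)) '' cantorSum a b (u * a) v) :=
          Metric.infDist_le_infDist_of_subset (image_add_cantorSum_mul_subset ha) (hne.image _)
      _ = Metric.infDist (z - u * (1 - a)) (cantorSum a b (u * a) v) :=
          Metric.infDist_image (isometry_add_right _)

lemma exists_infDist_cantorSum_le_right (hb : b ∈ Ico 0 1) (huv : v * (1 - 2 * b) ≤ u) {z : ℝ}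
    (hz : z ∈ Icc 0 (u + v)) : ∃ z' ∈ Icc 0 (u + v * b),
      Metric.infDist z (cantorSum a b u v) ≤ Metric.infDist z' (cantorSum a b u (v * b)) := by
  simp only [cantorSum_comm a, add_comm u] at hz ⊢
  exact exists_infDist_cantorSum_le_left hb huv hz

variable {P : ℝ → ℝ → Prop} {K : ℝ}

/-- The error is measured against `u * v` because splitting either summand shrinks this product by a
fixed factor, whereas `u + v` may hardly change. -/
lemma infDist_cantorSum_sq_le (ha : a ∈ Ico 0 1) (hb : b ∈ Ico 0 1)
    (hK : ∀ ⦃u v⦄, P u v → (u + v) ^ 2 ≤ K * (u * v))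
    (hP : ∀ ⦃u v⦄, P u v →
      (u * (1 - 2 * a) ≤ v ∧ P (u * a) v) ∨ (v * (1 - 2 * b) ≤ u ∧ P u (v * b)))
    (N : ℕ) (huv : P u v) {z : ℝ} (hz : z ∈ Icc 0 (u + v)) :
    Metric.infDist z (cantorSum a b u v) ^ 2 ≤ max a b ^ N * (K * (u * v)) := by
  induction N generalizing u v z with
  | zero =>
    have hdist : Metric.infDist z (cantorSum a b u v) ≤ u + v := by
      refine (Metric.infDist_le_dist_of_mem (zero_mem_cantorSum ..)).trans ?_
      rw [Real.dist_0_eq_abs, abs_of_nonneg hz.1]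
      exact hz.2
    rw [pow_zero, one_mul]
    exact (pow_le_pow_left₀ Metric.infDist_nonneg hdist 2).trans (hK huv)
  | succ N ih =>
    have hKuv : 0 ≤ K * (u * v) := (sq_nonneg _).trans (hK huv)
    have hmax : 0 ≤ max a b := le_max_of_le_left ha.1
    rcases hP huv with ⟨hcover, hPa⟩ | ⟨hcover, hPb⟩
    · obtain ⟨z', hz', hle⟩ := exists_infDist_cantorSum_le_left (b := b) ha hcover hz
      calc Metric.infDist z (cantorSum a b u v) ^ 2
          ≤ Metric.infDist z' (cantorSum a b (u * a) v) ^ 2 :=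
            pow_le_pow_left₀ Metric.infDist_nonneg hle 2
        _ ≤ max a b ^ N * (K * (u * a * v)) := ih hPa hz'
        _ = max a b ^ N * (a * (K * (u * v))) := by ring
        _ ≤ max a b ^ N * (max a b * (K * (u * v))) := by gcongr; exact le_max_left a b
        _ = max a b ^ (N + 1) * (K * (u * v)) := by ring
    · obtain ⟨z', hz', hle⟩ := exists_infDist_cantorSum_le_right (a := a) hb hcover hz
      calc Metric.infDist z (cantorSum a b u v) ^ 2
          ≤ Metric.infDist z' (cantorSum a b u (v * b)) ^ 2 :=
            pow_le_pow_left₀ Metric.infDist_nonneg hle 2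
        _ ≤ max a b ^ N * (K * (u * (v * b))) := ih hPb hz'
        _ = max a b ^ N * (b * (K * (u * v))) := by ring
        _ ≤ max a b ^ N * (max a b * (K * (u * v))) := by gcongr; exact le_max_right a b
        _ = max a b ^ (N + 1) * (K * (u * v)) := by ring

theorem Icc_subset_cantorSum_of_subdivision (ha : a ∈ Ico 0 1) (hb : b ∈ Ico 0 1)
    (hK : ∀ ⦃u v⦄, P u v → (u + v) ^ 2 ≤ K * (u * v))
    (hP : ∀ ⦃u v⦄, P u v →
      (u * (1 - 2 * a) ≤ v ∧ P (u * a) v) ∨ (v * (1 - 2 * b) ≤ u ∧ P u (v * b)))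
    (huv : P u v) : Icc 0 (u + v) ⊆ cantorSum a b u v := by
  intro z hz
  have hlim : Filter.Tendsto (fun N : ℕ => max a b ^ N * (K * (u * v))) Filter.atTop (nhds 0) := by
    simpa using (tendsto_pow_atTop_nhds_zero_of_lt_one (le_max_of_le_left ha.1)
      (max_lt ha.2 hb.2)).mul_const (K * (u * v))
  have hsq : Metric.infDist z (cantorSum a b u v) ^ 2 ≤ 0 :=
    ge_of_tendsto' hlim fun N => infDist_cantorSum_sq_le ha hb hK hP N huv hz
  rw [(isCompact_cantorSum ha hb).isClosed.mem_iff_infDist_zero ⟨0, zero_mem_cantorSum ..⟩]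
  exact pow_eq_zero_iff two_ne_zero |>.1 (hsq.antisymm (sq_nonneg _))

/-! ### Gaps that obstruct filling the hull -/

lemma le_mul_add_or_mul_one_sub_le_of_mem_cantorSum (ha : a ∈ Ico 0 1) (hb : b ∈ Ico 0 1)
    (hu : 0 ≤ u) (hv : 0 ≤ v) {z : ℝ} (hz : z ∈ cantorSum a b u v) :
    z ≤ u * a + v ∨ u * (1 - a) ≤ z := by
  obtain ⟨x, hx, y, hy, rfl⟩ := hz
  obtain ⟨hy₀, hy₁⟩ := middleCantor_subset_Icc hb hy
  refine (le_pow_succ_or_le_of_mem_middleCantor ha 0 hx).imp (fun hxa => ?_) fun hxa => ?_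
  · rw [zero_add, pow_one] at hxa
    exact add_le_add (mul_le_mul_of_nonneg_left hxa hu) (mul_le_of_le_one_right hv hy₁)
  · rw [pow_zero, one_mul] at hxa
    exact le_add_of_le_of_nonneg (mul_le_mul_of_nonneg_left hxa hu) (mul_nonneg hv hy₀)

lemma left_gap_le_of_Icc_subset_cantorSum (ha : a ∈ Ico 0 1) (hb : b ∈ Ico 0 1)
    (hu : 0 ≤ u) (hv : 0 ≤ v) (h : Icc 0 (u + v) ⊆ cantorSum a b u v) : u * (1 - 2 * a) ≤ v := by
  by_contra! hlt
  have hua : 0 ≤ u * a := mul_nonneg hu ha.1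
  obtain ⟨z, hz_low, hz_upp⟩ := exists_between (show u * a + v < u * (1 - a) by linarith)
  have hz : z ∈ cantorSum a b u v := h ⟨by linarith, by linarith⟩
  rcases le_mul_add_or_mul_one_sub_le_of_mem_cantorSum ha hb hu hv hz with hz | hz <;> linarith

lemma le_add_or_left_le_or_right_le_of_mem_cantorSum (ha : a ∈ Ico 0 1) (hb : b ∈ Ico 0 1)
    (hu : 0 ≤ u) (hv : 0 ≤ v) (i j : ℕ) {z : ℝ} (hz : z ∈ cantorSum a b u v) :
    z ≤ u * a ^ (i + 1) + v * b ^ (j + 1) ∨ u * (a ^ i * (1 - a)) ≤ z ∨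
      v * (b ^ j * (1 - b)) ≤ z := by
  obtain ⟨x, hx, y, hy, rfl⟩ := hz
  rcases le_pow_succ_or_le_of_mem_middleCantor ha i hx with hxa | hxa
  · rcases le_pow_succ_or_le_of_mem_middleCantor hb j hy with hyb | hyb
    · exact .inl (add_le_add (mul_le_mul_of_nonneg_left hxa hu) (mul_le_mul_of_nonneg_left hyb hv))
    · exact .inr <| .inr <| le_add_of_nonneg_of_le
        (mul_nonneg hu (middleCantor_subset_Icc ha hx).1) (mul_le_mul_of_nonneg_left hyb hv)
  · exact .inr <| .inl <| le_add_of_le_of_nonneg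
      (mul_le_mul_of_nonneg_left hxa hu) (mul_nonneg hv (middleCantor_subset_Icc hb hy).1)

lemma gap_le_or_gap_le_of_Icc_subset_cantorSum (ha : a ∈ Ico 0 1) (hb : b ∈ Ico 0 1)
    (hu : 0 ≤ u) (hv : 0 ≤ v) (h : Icc 0 (u + v) ⊆ cantorSum a b u v) (i j : ℕ) :
    u * (a ^ i * (1 - 2 * a)) ≤ v * b ^ (j + 1) ∨ v * (b ^ j * (1 - 2 * b)) ≤ u * a ^ (i + 1) := by
  by_contra! hlt
  have hua : 0 ≤ u * a ^ (i + 1) := mul_nonneg hu (pow_nonneg ha.1 _)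
  have hvb : 0 ≤ v * b ^ (j + 1) := mul_nonneg hv (pow_nonneg hb.1 _)
  have hgap_a : u * a ^ (i + 1) + v * b ^ (j + 1) < u * (a ^ i * (1 - a)) := by
    rw [pow_succ a]
    linarith [hlt.1]
  have hgap_b : u * a ^ (i + 1) + v * b ^ (j + 1) < v * (b ^ j * (1 - b)) := by
    rw [pow_succ b]
    linarith [hlt.2]
  have hhull : u * (a ^ i * (1 - a)) ≤ u := mul_le_of_le_one_right hu
    (mul_le_one₀ (pow_le_one₀ ha.1 ha.2.le) (sub_nonneg.2 ha.2.le) (sub_le_self 1 ha.1))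
  obtain ⟨z, hz_low, hz_upp⟩ := exists_between (lt_min hgap_a hgap_b)
  obtain ⟨hz_a, hz_b⟩ := lt_min_iff.1 hz_upp
  have hz : z ∈ cantorSum a b u v := h ⟨by linarith, by linarith⟩
  rcases le_add_or_left_le_or_right_le_of_mem_cantorSum ha hb hu hv i j hz with hz | hz | hz <;>
    linarith

end CantorSum

/-! ### Integers -/

lemma exists_nat_mul_sub_nat_mul_eq {n m : ℕ} (hn : 0 < n) (hm : 0 < m) (h : n.Coprime m) (k : ℤ) :
    ∃ i j : ℕ, (m * j - n * i : ℤ) = k := by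
  obtain ⟨s, t, hst⟩ := Nat.isCoprime_iff_coprime.2 h
  -- A large common multiple of `(m, n)` makes both Bézout coefficients nonnegative.
  set c : ℤ := |k * s| + |k * t|
  have hcm : c ≤ m * c := le_mul_of_one_le_left (by positivity) (by exact_mod_cast hm)
  have hcn : c ≤ n * c := le_mul_of_one_le_left (by positivity) (by exact_mod_cast hn)
  lift -(k * s) + m * c to ℕ using
    by linarith [le_abs_self (k * s), abs_nonneg (k * t)] with i hi
  lift k * t + n * c to ℕ using
    by linarith [neg_abs_le (k * t), abs_nonneg (k * s)] with j hj
  refine ⟨i, j, ?_⟩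
  rw [hi, hj]
  linear_combination k * hst

lemma exists_mem_Icc_and_of_succ_or {p q : ℤ → Prop} {m k : ℤ} (hmk : m ≤ k) (hp : p m) (hq : q k)
    (h : ∀ n, p (n + 1) ∨ q n) : ∃ n ∈ Icc m k, p n ∧ q n := by
  induction k, hmk using Int.leInduction with
  | base => exact ⟨m, ⟨le_rfl, le_rfl⟩, hp, hq⟩
  | succ k hmk ih =>
    rcases h k with hpk | hqk
    · exact ⟨k + 1, ⟨by lia, le_rfl⟩, hpk, hq⟩
    · obtain ⟨n, hn, hpq⟩ := ih hqk
      exact ⟨n, ⟨hn.1, hn.2.trans (by lia)⟩, hpq⟩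

/-! ### Admissible sizes -/

/-- The sizes `u, v > 0` are admissible if `v / u` lies in the union of the intervals
`γⁿ · [(1 - 2α)/(γβ), α/(1 - 2β)]` with `-m₀ + 1 ≤ n ≤ n₀`, written without denominators. These are
the sizes for which `u · C_α + v · C_β` fills its hull. -/
def Admissible (γ α β : ℝ) (n₀ m₀ : ℕ) (u v : ℝ) : Prop :=
  0 < u ∧ 0 < v ∧ ∃ n ∈ Icc (-(m₀ : ℤ) + 1) n₀,
    γ ^ n * (1 - 2 * α) * u ≤ γ * β * v ∧ (1 - 2 * β) * v ≤ γ ^ n * α * u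

lemma add_sq_le_of_mul_le_of_mul_le {p q u v : ℝ} (hp : 0 < p) (hq : 0 < q) (hu : 0 ≤ u)
    (hv : 0 ≤ v) (hpuv : u * p ≤ v) (hqvu : v * q ≤ u) :
    (u + v) ^ 2 ≤ (p⁻¹ + 2 + q⁻¹) * (u * v) := by
  have hu_le : u ≤ v * p⁻¹ := (le_mul_inv_iff₀ hp).2 hpuv
  have hv_le : v ≤ u * q⁻¹ := (le_mul_inv_iff₀ hq).2 hqvu
  calc (u + v) ^ 2 = u * u + 2 * (u * v) + v * v := by ring
    _ ≤ u * (v * p⁻¹) + 2 * (u * v) + v * (u * q⁻¹) := by gcongr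
    _ = (p⁻¹ + 2 + q⁻¹) * (u * v) := by ring

lemma pos_of_zpow_neg_lt_one {γ : ℝ} {n : ℕ} (h : γ ^ (-(n : ℤ)) < 1) : 0 < n :=
  Nat.pos_of_ne_zero fun hn => by simp [hn] at h

section Admissible

variable {γ α β : ℝ} {n₀ m₀ : ℕ} {u v : ℝ}

lemma admissible_one_iff (hγ : 0 < γ) (hβ₀ : 0 < β) (hα : α < 1 / 2) (hβ : β < 1 / 2)
    {l : ℝ} : Admissible γ α β n₀ m₀ 1 l ↔
      ∃ n : ℤ, -(m₀ : ℤ) + 1 ≤ n ∧ n ≤ (n₀ : ℤ) ∧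
        γ ^ n * ((1 - 2 * α) / (γ * β)) ≤ l ∧ l ≤ γ ^ n * (α / (1 - 2 * β)) := by
  have hα' : 0 < 1 - 2 * α := by linarith
  have hβ' : 0 < 1 - 2 * β := by linarith
  simp only [Admissible, one_pos, true_and, mem_Icc, and_assoc, mul_one, ← mul_div_assoc,
    div_le_iff₀' (mul_pos hγ hβ₀), le_div_iff₀' hβ']
  refine ⟨And.right, fun h => ⟨?_, h⟩⟩
  obtain ⟨n, -, -, hlow, -⟩ := h
  exact pos_of_mul_pos_right ((by positivity : 0 < γ ^ n * (1 - 2 * α)).trans_le hlow)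
    (by positivity)

lemma Admissible.left_gap_le (hγ : 1 < γ) (hβdef : β = γ ^ (-(m₀ : ℤ)))
    (hα : α ≤ 1 / 2) (h : Admissible γ α β n₀ m₀ u v) : u * (1 - 2 * α) ≤ v := by
  obtain ⟨hu, -, n, ⟨hn, -⟩, hlow, -⟩ := h
  have hγ₀ : 0 < γ := one_pos.trans hγ
  have hβ₀ : 0 < β := hβdef ▸ zpow_pos hγ₀ _
  have hpow : γ * β ≤ γ ^ n := by
    calc γ * β = γ ^ (-(m₀ : ℤ) + 1) := by rw [hβdef, zpow_add_one₀ hγ₀.ne', mul_comm]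
      _ ≤ γ ^ n := zpow_le_zpow_right₀ hγ.le hn
  have hα' : 0 ≤ 1 - 2 * α := by linarith
  refine le_of_mul_le_mul_left ?_ (mul_pos hγ₀ hβ₀)
  calc γ * β * (u * (1 - 2 * α)) ≤ γ ^ n * (u * (1 - 2 * α)) := by gcongr
    _ = γ ^ n * (1 - 2 * α) * u := by ring
    _ ≤ γ * β * v := hlow

lemma Admissible.right_gap_le (hγ : 1 < γ) (hαdef : α = γ ^ (-(n₀ : ℤ)))
    (h : Admissible γ α β n₀ m₀ u v) : v * (1 - 2 * β) ≤ u := by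
  obtain ⟨hu, -, n, ⟨-, hn⟩, -, hupp⟩ := h
  have hpow : γ ^ n * α ≤ 1 := by
    rw [hαdef, ← zpow_add₀ (one_pos.trans hγ).ne']
    exact zpow_le_one_of_nonpos₀ hγ.le (by lia)
  calc v * (1 - 2 * β) = (1 - 2 * β) * v := mul_comm _ _
    _ ≤ γ ^ n * α * u := hupp
    _ ≤ u := mul_le_of_le_one_left hu.le hpow

lemma Admissible.mul_left_or_mul_right (hγ : 1 < γ) (hαdef : α = γ ^ (-(n₀ : ℤ)))
    (hβdef : β = γ ^ (-(m₀ : ℤ))) (h : Admissible γ α β n₀ m₀ u v) :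
    Admissible γ α β n₀ m₀ (u * α) v ∨ Admissible γ α β n₀ m₀ u (v * β) := by
  obtain ⟨hu, hv, n, ⟨hn_low, hn_upp⟩, hlow, hupp⟩ := h
  have hγ₀ : 0 < γ := one_pos.trans hγ
  have hα₀ : 0 < α := hαdef ▸ zpow_pos hγ₀ _
  have hβ₀ : 0 < β := hβdef ▸ zpow_pos hγ₀ _
  rcases le_or_gt n 0 with hn | hn
  · have hpow : γ ^ (n + n₀) * α = γ ^ n := by
      rw [hαdef, ← zpow_add₀ hγ₀.ne', add_neg_cancel_right]
    refine .inl ⟨mul_pos hu hα₀, hv, n + n₀, ⟨by lia, by lia⟩, ?_, ?_⟩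
    · calc γ ^ (n + n₀) * (1 - 2 * α) * (u * α)
          = γ ^ (n + n₀) * α * (1 - 2 * α) * u := by ring
        _ ≤ γ * β * v := by rwa [hpow]
    · calc (1 - 2 * β) * v ≤ γ ^ (n + n₀) * α * α * u := by rwa [hpow]
        _ = γ ^ (n + n₀) * α * (u * α) := by ring
  · have hpow : γ ^ (n - m₀) = γ ^ n * β := by
      rw [hβdef, ← zpow_add₀ hγ₀.ne', sub_eq_add_neg]
    refine .inr ⟨hu, mul_pos hv hβ₀, n - m₀, ⟨by lia, by lia⟩, ?_, ?_⟩
    · calc γ ^ (n - m₀) * (1 - 2 * α) * u = γ ^ n * (1 - 2 * α) * u * β := by rw [hpow]; ring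
        _ ≤ γ * β * v * β := by gcongr
        _ = γ * β * (v * β) := by ring
    · calc (1 - 2 * β) * (v * β) = (1 - 2 * β) * v * β := by ring
        _ ≤ γ ^ n * α * u * β := by gcongr
        _ = γ ^ (n - m₀) * α * u := by rw [hpow]; ring

theorem Admissible.Icc_subset_cantorSum (hγ : 1 < γ) (hαdef : α = γ ^ (-(n₀ : ℤ)))
    (hβdef : β = γ ^ (-(m₀ : ℤ))) (hα : α < 1 / 2) (hβ : β < 1 / 2)
    (h : Admissible γ α β n₀ m₀ u v) : Icc 0 (u + v) ⊆ cantorSum α β u v := by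
  have hγ₀ : 0 < γ := one_pos.trans hγ
  have hα_mem : α ∈ Ico 0 1 := ⟨hαdef ▸ (zpow_pos hγ₀ _).le, by linarith⟩
  have hβ_mem : β ∈ Ico 0 1 := ⟨hβdef ▸ (zpow_pos hγ₀ _).le, by linarith⟩
  refine Icc_subset_cantorSum_of_subdivision (P := Admissible γ α β n₀ m₀)
    (K := (1 - 2 * α)⁻¹ + 2 + (1 - 2 * β)⁻¹) hα_mem hβ_mem (fun u v huv => ?_) (fun u v huv => ?_) h
  · exact add_sq_le_of_mul_le_of_mul_le (by linarith) (by linarith) huv.1.le huv.2.1.le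
      (huv.left_gap_le hγ hβdef hα.le) (huv.right_gap_le hγ hαdef)
  · exact (huv.mul_left_or_mul_right hγ hαdef hβdef).imp
      (fun h => ⟨huv.left_gap_le hγ hβdef hα.le, h⟩)
      (fun h => ⟨huv.right_gap_le hγ hαdef, h⟩)

lemma zpow_gap_le_or_gap_le_of_Icc_subset_cantorSum (hγ : 0 < γ) (hn₀ : 0 < n₀) (hm₀ : 0 < m₀)
    (hcop : n₀.Coprime m₀) (hαdef : α = γ ^ (-(n₀ : ℤ))) (hβdef : β = γ ^ (-(m₀ : ℤ)))
    (hα : α < 1) (hβ : β < 1) (hu : 0 ≤ u) (hv : 0 ≤ v)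
    (h : Icc 0 (u + v) ⊆ cantorSum α β u v) (n : ℤ) :
    γ ^ n * (1 - 2 * α) * u ≤ β * v ∨ (1 - 2 * β) * v ≤ γ ^ n * α * u := by
  have hα₀ : 0 < α := hαdef ▸ zpow_pos hγ _
  have hβ₀ : 0 < β := hβdef ▸ zpow_pos hγ _
  obtain ⟨i, j, hij⟩ := exists_nat_mul_sub_nat_mul_eq hn₀ hm₀ hcop n
  have hpow : α ^ i = γ ^ n * β ^ j := by
    rw [hαdef, hβdef, ← zpow_natCast, ← zpow_natCast, ← zpow_mul, ← zpow_mul, ← zpow_add₀ hγ.ne',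
      ← hij]
    congr 1
    ring
  have hβj : 0 < β ^ j := pow_pos hβ₀ j
  refine (gap_le_or_gap_le_of_Icc_subset_cantorSum ⟨hα₀.le, hα⟩ ⟨hβ₀.le, hβ⟩ hu hv h
    i j).imp (fun hgap => ?_) fun hgap => ?_
  · refine le_of_mul_le_mul_left ?_ hβj
    calc β ^ j * (γ ^ n * (1 - 2 * α) * u) = u * (α ^ i * (1 - 2 * α)) := by rw [hpow]; ring
      _ ≤ v * β ^ (j + 1) := hgap
      _ = β ^ j * (β * v) := by ring
  · refine le_of_mul_le_mul_left ?_ hβj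
    calc β ^ j * ((1 - 2 * β) * v) = v * (β ^ j * (1 - 2 * β)) := by ring
      _ ≤ u * α ^ (i + 1) := hgap
      _ = β ^ j * (γ ^ n * α * u) := by rw [pow_succ, hpow]; ring

theorem admissible_of_Icc_subset_cantorSum (hγ : 0 < γ) (hcop : n₀.Coprime m₀)
    (hαdef : α = γ ^ (-(n₀ : ℤ))) (hβdef : β = γ ^ (-(m₀ : ℤ))) (hα : α < 1 / 2) (hβ : β < 1 / 2)
    (hu : 0 < u) (hv : 0 ≤ v) (h : Icc 0 (u + v) ⊆ cantorSum α β u v) :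
    Admissible γ α β n₀ m₀ u v := by
  have hn₀ : 0 < n₀ := pos_of_zpow_neg_lt_one (γ := γ) (by linarith)
  have hm₀ : 0 < m₀ := pos_of_zpow_neg_lt_one (γ := γ) (by linarith)
  have hα_mem : α ∈ Ico 0 1 := ⟨hαdef ▸ (zpow_pos hγ _).le, by linarith⟩
  have hβ_mem : β ∈ Ico 0 1 := ⟨hβdef ▸ (zpow_pos hγ _).le, by linarith⟩
  have hlow : u * (1 - 2 * α) ≤ v :=
    left_gap_le_of_Icc_subset_cantorSum hα_mem hβ_mem hu.le hv h
  have hupp : v * (1 - 2 * β) ≤ u :=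
    left_gap_le_of_Icc_subset_cantorSum hβ_mem hα_mem hv hu.le
      (by rwa [add_comm, cantorSum_comm])
  refine ⟨hu, (mul_pos hu (by linarith)).trans_le hlow,
    exists_mem_Icc_and_of_succ_or (by lia) ?_ ?_ fun n => ?_⟩
  · calc γ ^ (-(m₀ : ℤ) + 1) * (1 - 2 * α) * u = γ * β * (u * (1 - 2 * α)) := by
          rw [zpow_add_one₀ hγ.ne', ← hβdef]; ring
      _ ≤ γ * β * v := by have := hβ_mem.1; gcongr
  · have hpow : γ ^ (n₀ : ℤ) * α = 1 := by rw [hαdef, ← zpow_add₀ hγ.ne', add_neg_cancel, zpow_zero]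
    rwa [hpow, one_mul, mul_comm]
  · refine (zpow_gap_le_or_gap_le_of_Icc_subset_cantorSum hγ hn₀ hm₀ hcop hαdef hβdef hα_mem.2
      hβ_mem.2 hu.le hv h n).imp_left fun hn => ?_
    calc γ ^ (n + 1) * (1 - 2 * α) * u = γ * (γ ^ n * (1 - 2 * α) * u) := by
          rw [zpow_add_one₀ hγ.ne']; ring
      _ ≤ γ * (β * v) := by gcongr
      _ = γ * β * v := by ring

end Admissible

theorem stmt8_general (γ : ℝ) (hγ : 1 < γ) (n₀ m₀ : ℕ) (hcop : Nat.Coprime n₀ m₀) (α β : ℝ)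
    (hαdef : α = γ ^ (-(n₀ : ℤ))) (hβdef : β = γ ^ (-(m₀ : ℤ))) (hα : α < 1 / 2) (hβ : β < 1 / 2)
    (l : ℝ) :
    diffSet α β l = Set.Icc (-l) 1 ↔
      ∃ n : ℤ, -(m₀ : ℤ) + 1 ≤ n ∧ n ≤ (n₀ : ℤ) ∧
        γ ^ n * ((1 - 2 * α) / (γ * β)) ≤ l ∧ l ≤ γ ^ n * (α / (1 - 2 * β)) := by
  have hγ₀ : 0 < γ := one_pos.trans hγ
  have hβ₀ : 0 < β := hβdef ▸ zpow_pos hγ₀ _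
  have hα_mem : α ∈ Ico 0 1 := ⟨hαdef ▸ (zpow_pos hγ₀ _).le, by linarith⟩
  have hβ_mem : β ∈ Ico 0 1 := ⟨hβ₀.le, by linarith⟩
  rw [← admissible_one_iff hγ₀ hβ₀ hα hβ]
  constructor
  · intro h
    exact admissible_of_Icc_subset_cantorSum hγ₀ hcop hαdef hβdef hα hβ one_pos
      (nonneg_of_diffSet_eq_Icc h) ((diffSet_eq_Icc_iff hα_mem l).1 h).ge
  · intro h
    exact (diffSet_eq_Icc_iff hα_mem l).2 <|
      (cantorSum_subset_Icc hα_mem hβ_mem one_pos.le h.2.1.le).antisymm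
        (h.Icc_subset_cantorSum hγ hαdef hβdef hα hβ)

theorem stmt8 (γ : ℝ) (hγ : 1 < γ) (n₀ m₀ : ℕ) (hn₀ : 0 < n₀) (hm₀ : 0 < m₀)
    (hcop : Nat.Coprime n₀ m₀) (α β : ℝ)
    (hαdef : α = γ ^ (-(n₀ : ℤ))) (hβdef : β = γ ^ (-(m₀ : ℤ)))
    (hα0 : 0 < α) (hα : α < 1 / 2) (hβ0 : 0 < β) (hβ : β < 1 / 2)
    (hτ : (α / (1 - 2 * α)) * (β / (1 - 2 * β)) < 1)
    (hγτ : 1 / γ ≤ (α / (1 - 2 * α)) * (β / (1 - 2 * β)))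
    (l : ℝ) (hl : l ≠ 0) :
    diffSet α β l = Set.Icc (-l) 1 ↔
      ∃ n : ℤ, -(m₀ : ℤ) + 1 ≤ n ∧ n ≤ (n₀ : ℤ) ∧
        γ ^ n * ((1 - 2 * α) / (γ * β)) ≤ l ∧ l ≤ γ ^ n * (α / (1 - 2 * β)) :=
  stmt8_general γ hγ n₀ m₀ hcop α β hαdef hβdef hα hβ l
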